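/- Let L be a right Leibniz algebra over a field of characteristic ≠ 2 and B a two-sided ideal of L that is Es_{k'}-right nil for some integer k' ≥ 1, with B^{ℓ'} = 0 for some integer ℓ' ≥ 1. Set k = max(k', ℓ'). Then B^{⟨4k² − 2k + 1⟩} = 0; that is, every product of elements of L having at least 4k² − 2k + 1 factors in B is zero. -/

import Mathlib

open Classical

/-- The binary product `mul` is bilinear over `F`. -/
def IsBilin (F : Type*) [Field F] {L : Type*} [AddCommGroup L] [Module F L]
    (mul : L → L → L) : Prop :=
  (∀ a b c : L, mul (a + b) c = mul a c + mul b c) ∧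
  (∀ a b c : L, mul a (b + c) = mul a b + mul a c) ∧
  (∀ (r : F) (a b : L), mul (r • a) b = r • mul a b) ∧
  (∀ (r : F) (a b : L), mul a (r • b) = r • mul a b)

/-- The (right) Leibniz identity: `a(bc) = (ab)c - (ac)b`. -/
def IsRightLeibniz {L : Type*} [AddCommGroup L] (mul : L → L → L) : Prop :=
  ∀ a b c : L, mul a (mul b c) = mul (mul a b) c - mul (mul a c) b

/-- The left Leibniz identity: `a(bc) = (ab)c + b(ac)`. -/
def IsLeftLeibniz {L : Type*} [AddCommGroup L] (mul : L → L → L) : Prop :=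
  ∀ a b c : L, mul a (mul b c) = mul (mul a b) c + mul b (mul a c)

/-- `B` is a two-sided ideal: `xb ∈ B` and `bx ∈ B` for all `x ∈ L`, `b ∈ B`. -/
def IsIdeal {F : Type*} [Field F] {L : Type*} [AddCommGroup L] [Module F L]
    (mul : L → L → L) (B : Submodule F L) : Prop :=
  ∀ (x b : L), b ∈ B → mul x b ∈ B ∧ mul b x ∈ B

/-- `Ess F mul`: the two-sided ideal of `L` generated by the squares `{xx : x ∈ L}`. -/
def Ess (F : Type*) [Field F] {L : Type*} [AddCommGroup L] [Module F L]
    (mul : L → L → L) : Submodule F L :=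
  sInf {I : Submodule F L | (∀ x : L, mul x x ∈ I) ∧ IsIdeal mul I}

/-- The two-sided ideal of `L` generated by a subspace `S`. -/
def idealClosure (F : Type*) [Field F] {L : Type*} [AddCommGroup L] [Module F L]
    (mul : L → L → L) (S : Submodule F L) : Submodule F L :=
  sInf {I : Submodule F L | S ≤ I ∧ IsIdeal mul I}

/-- Right powers: `B^0 = L` (convention), `B^1 = B`,
`B^{n+1} = span {bc : b ∈ B^n, c ∈ B}`. -/
def rpow (F : Type*) [Field F] {L : Type*} [AddCommGroup L] [Module F L]
    (mul : L → L → L) (B : Submodule F L) : ℕ → Submodule F L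
  | 0 => ⊤
  | 1 => B
  | n + 2 => Submodule.span F
      {x : L | ∃ b ∈ rpow F mul B (n + 1), ∃ c ∈ B, x = mul b c}

/-- Left powers: `^0B = L` (convention), `^1B = B`,
`^{n+1}B = span {bc : b ∈ B, c ∈ ^nB}`. -/
def lpow (F : Type*) [Field F] {L : Type*} [AddCommGroup L] [Module F L]
    (mul : L → L → L) (B : Submodule F L) : ℕ → Submodule F L
  | 0 => ⊤
  | 1 => B
  | n + 2 => Submodule.span F
      {x : L | ∃ b ∈ B, ∃ c ∈ lpow F mul B (n + 1), x = mul b c}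

/-- The right-normed product `rightProd mul a [b₁, …, bₖ] = ((…(a b₁)…) bₖ)`,
with all parentheses associated to the left. -/
def rightProd {L : Type*} (mul : L → L → L) : L → List L → L
  | a, [] => a
  | a, b :: l => rightProd mul (mul a b) l

/-- `D_{(L,k)}`: the span of all right-normed products `d a_k ⋯ a_1`
with `d ∈ D` and `a_i ∈ L`. -/
def rightMulSpan (F : Type*) [Field F] {L : Type*} [AddCommGroup L] [Module F L]
    (mul : L → L → L) (D : Submodule F L) (k : ℕ) : Submodule F L :=
  Submodule.span F
    {x : L | ∃ d ∈ D, ∃ l : List L, l.length = k ∧ x = rightProd mul d l}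

/-- A formal nonassociative product (a word of elements of `L` parenthesized
in an arbitrary way). -/
inductive PTree (L : Type*) where
  | leaf : L → PTree L
  | node : PTree L → PTree L → PTree L

/-- Evaluation of a parenthesized product in `L`. -/
def PTree.eval {L : Type*} (mul : L → L → L) : PTree L → L
  | .leaf a => a
  | .node s t => mul (PTree.eval mul s) (PTree.eval mul t)

/-- The list of factors of a parenthesized product, in order. -/
def PTree.leaves {L : Type*} : PTree L → List L
  | .leaf a => [a]
  | .node s t => s.leaves ++ t.leaves

/-- The length (number of factors) of a parenthesized product. -/
def PTree.length {L : Type*} (t : PTree L) : ℕ := t.leaves.length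

/-- The weight of a parenthesized product with respect to `B`:
the number of its factors lying in `B`. -/
noncomputable def PTree.weight {F : Type*} [Field F] {L : Type*} [AddCommGroup L]
    [Module F L] (B : Submodule F L) (t : PTree L) : ℕ :=
  t.leaves.countP (fun y => decide (y ∈ B))

/-- `B^{⟨n⟩}`: the span of all products of elements of `L` of weight at least `n`
with respect to `B`. -/
noncomputable def weightSpan (F : Type*) [Field F] {L : Type*} [AddCommGroup L]
    [Module F L] (mul : L → L → L) (B : Submodule F L) (n : ℕ) : Submodule F L :=
  Submodule.span F
    {x : L | ∃ t : PTree L, n ≤ PTree.weight B t ∧ x = PTree.eval mul t}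

/-- `B^{{n}}`: the span of all length-`n` products all of whose factors lie in `B`. -/
def lengthSpanIn (F : Type*) [Field F] {L : Type*} [AddCommGroup L] [Module F L]
    (mul : L → L → L) (B : Submodule F L) (n : ℕ) : Submodule F L :=
  Submodule.span F
    {x : L | ∃ t : PTree L, PTree.length t = n ∧ (∀ a ∈ PTree.leaves t, a ∈ B) ∧
      x = PTree.eval mul t}

/-!
The right powers form a filtration, `B^i B^j ⊆ B^{i+j}`: the Leibniz identity
`a(bc) = (ab)c - (ac)b` lowers the power on the right factor one step at a time, moving it to the
left. With the convention `B^0 = L` the inclusion also covers factors outside `B`, so a product of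
weight `m`, however it is parenthesized, lies in `B^m`.
-/

/-- The product of `L`, bundled as a Mathlib bilinear map so that span arguments become statements
about preimages of submodules under linear maps. -/
def IsBilin.toLinearMap₂ {F : Type*} [Field F] {L : Type*} [AddCommGroup L] [Module F L]
    {mul : L → L → L} (hbil : IsBilin F mul) : L →ₗ[F] L →ₗ[F] L :=
  LinearMap.mk₂ F mul hbil.1 hbil.2.2.1 hbil.2.1 hbil.2.2.2

section

variable {F : Type*} [Field F] {L : Type*} [AddCommGroup L] [Module F L]
  {mul : L → L → L} {B : Submodule F L}

lemma IsBilin.mul_mem_of_left_mem_span (hbil : IsBilin F mul) {S : Set L} {P : Submodule F L}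
    {x y : L} (hS : ∀ s ∈ S, mul s y ∈ P) (hx : x ∈ Submodule.span F S) : mul x y ∈ P :=
  (Submodule.span_le (p := P.comap (hbil.toLinearMap₂.flip y))).2 hS hx

lemma IsBilin.mul_mem_of_right_mem_span (hbil : IsBilin F mul) {S : Set L} {P : Submodule F L}
    {x y : L} (hS : ∀ s ∈ S, mul x s ∈ P) (hy : y ∈ Submodule.span F S) : mul x y ∈ P :=
  (Submodule.span_le (p := P.comap (hbil.toLinearMap₂ x))).2 hS hy

lemma IsRightLeibniz.mul_mul_eq_add (hleib : IsRightLeibniz mul) (a b c : L) :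
    mul (mul a b) c = mul a (mul b c) + mul (mul a c) b :=
  sub_eq_iff_eq_add.1 (hleib a b c).symm

lemma mul_mem_rpow_succ (hB : IsIdeal mul B) {n : ℕ} {b c : L}
    (hb : b ∈ rpow F mul B n) (hc : c ∈ B) : mul b c ∈ rpow F mul B (n + 1) :=
  match n with
  | 0 => (hB b c hc).1
  | _ + 1 => Submodule.subset_span ⟨b, hb, c, hc, rfl⟩

lemma mul_mem_rpow_of_left_mem (hbil : IsBilin F mul) (hleib : IsRightLeibniz mul)
    (hB : IsIdeal mul B) {n : ℕ} {a : L} (ha : a ∈ rpow F mul B n) (x : L) :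
    mul a x ∈ rpow F mul B n := by
  induction n using Nat.twoStepInduction generalizing a with
  | zero => exact Submodule.mem_top
  | one => exact (hB x a ha).2
  | more n _ ih =>
    refine hbil.mul_mem_of_left_mem_span ?_ ha
    rintro _ ⟨b, hb, c, hc, rfl⟩
    rw [hleib.mul_mul_eq_add]
    exact add_mem (mul_mem_rpow_succ hB hb (hB x c hc).2) (mul_mem_rpow_succ hB (ih hb) hc)

lemma antitone_rpow (hbil : IsBilin F mul) (hleib : IsRightLeibniz mul) (hB : IsIdeal mul B) :
    Antitone (rpow F mul B) := by
  refine antitone_nat_of_succ_le fun n => ?_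
  cases n with
  | zero => exact le_top
  | succ n =>
    refine Submodule.span_le.2 ?_
    rintro _ ⟨b, hb, c, -, rfl⟩
    exact mul_mem_rpow_of_left_mem hbil hleib hB hb c

lemma mul_mem_rpow_add (hbil : IsBilin F mul) (hleib : IsRightLeibniz mul) (hB : IsIdeal mul B)
    {i j : ℕ} {a b : L} (ha : a ∈ rpow F mul B i) (hb : b ∈ rpow F mul B j) :
    mul a b ∈ rpow F mul B (i + j) := by
  induction j using Nat.twoStepInduction generalizing i a b with
  | zero => exact mul_mem_rpow_of_left_mem hbil hleib hB ha b
  | one => exact mul_mem_rpow_succ hB ha hb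
  | more j _ ih =>
    refine hbil.mul_mem_of_right_mem_span ?_ hb
    rintro _ ⟨b, hb, c, hc, rfl⟩
    have hab_c : mul (mul a b) c ∈ rpow F mul B (i + (j + 2)) :=
      mul_mem_rpow_succ hB (ih ha hb) hc
    have hac_b : mul (mul a c) b ∈ rpow F mul B (i + (j + 2)) := by
      have h := ih (mul_mem_rpow_succ hB ha hc) hb
      rwa [add_right_comm, add_assoc] at h
    rw [hleib]
    exact sub_mem hab_c hac_b

lemma PTree.weight_leaf (a : L) : (PTree.leaf a).weight B = if a ∈ B then 1 else 0 := by
  simp [PTree.weight, PTree.leaves, List.countP_singleton]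

lemma PTree.weight_node (s t : PTree L) :
    (PTree.node s t).weight B = s.weight B + t.weight B :=
  List.countP_append

lemma PTree.eval_mem_rpow_weight (hbil : IsBilin F mul) (hleib : IsRightLeibniz mul)
    (hB : IsIdeal mul B) (t : PTree L) : t.eval mul ∈ rpow F mul B (t.weight B) := by
  induction t with
  | leaf a =>
    rw [PTree.weight_leaf]
    split_ifs with ha
    · exact ha
    · exact Submodule.mem_top
  | node s t hs ht =>
    rw [PTree.weight_node]
    exact mul_mem_rpow_add hbil hleib hB hs ht

lemma weightSpan_le_rpow (hbil : IsBilin F mul) (hleib : IsRightLeibniz mul) (hB : IsIdeal mul B)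
    (n : ℕ) : weightSpan F mul B n ≤ rpow F mul B n := by
  refine Submodule.span_le.2 ?_
  rintro _ ⟨t, ht, rfl⟩
  exact antitone_rpow hbil hleib hB ht (t.eval_mem_rpow_weight hbil hleib hB)

lemma antitone_weightSpan : Antitone (weightSpan F mul B) := fun _ _ hmn =>
  Submodule.span_mono fun _ ⟨t, ht, hx⟩ => ⟨t, hmn.trans ht, hx⟩

theorem weightSpan_eq_bot_of_right_nilpotent_general (hbil : IsBilin F mul)
    (hleib : IsRightLeibniz mul) (hB : IsIdeal mul B) {l : ℕ} (hrnil : rpow F mul B l = ⊥) :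
    weightSpan F mul B l = ⊥ :=
  le_bot_iff.1 <| hrnil ▸ weightSpan_le_rpow hbil hleib hB l

end

lemma le_four_mul_sq_sub_two_mul_add_one (k : ℕ) : k ≤ 4 * k ^ 2 - 2 * k + 1 := by
  have hsq : k ≤ k ^ 2 := Nat.le_self_pow two_ne_zero k
  omega

/-- If `B` is `Es_{k'}`-right nil and `B^{ℓ'} = 0`, then with
`k = max k' ℓ'` one has `B^{⟨4k² - 2k + 1⟩} = 0`. -/
theorem weightSpan_eq_bot_of_right_nilpotent
    {F : Type*} [Field F] {L : Type*} [AddCommGroup L] [Module F L]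
    (h2 : (2 : F) ≠ 0) (mul : L → L → L)
    (hbil : IsBilin F mul) (hleib : IsRightLeibniz mul)
    (B : Submodule F L) (hB : IsIdeal mul B)
    (k' l' : ℕ) (hk' : 1 ≤ k') (hl' : 1 ≤ l')
    (hnil : rightMulSpan F mul (B ⊓ Ess F mul) k' = ⊥)
    (hrnil : rpow F mul B l' = ⊥) :
    weightSpan F mul B (4 * (max k' l') ^ 2 - 2 * (max k' l') + 1) = ⊥ := by
  have hle := (le_max_right k' l').trans (le_four_mul_sq_sub_two_mul_add_one _)
  exact le_bot_iff.1 <| (antitone_weightSpan hle).trans_eq <|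
    weightSpan_eq_bot_of_right_nilpotent_general hbil hleib hB hrnil
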